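/- There exists a ring automorphism φ of Hₙ such that φ(𝔖_w) = 𝔖_{w₀ww₀} for every w ∈ Sₙ. -/

import Mathlib

open Equiv MvPolynomial

attribute [local instance] Classical.propDecidable

namespace SchubertPieri

/-- Position `j ∈ {1,…,N}` (1-indexed) as an element of `Fin N` (0-indexed). -/
def pos (N : ℕ) [NeZero N] (j : ℕ) : Fin N :=
  ⟨(j - 1) % N, Nat.mod_lt _ (Nat.pos_of_ne_zero (NeZero.ne N))⟩

/-- The transposition `t_{a,b}` interchanging positions `a` and `b` (1-indexed). -/
def t (N : ℕ) [NeZero N] (a b : ℕ) : Equiv.Perm (Fin N) :=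
  Equiv.swap (pos N a) (pos N b)

/-- The value `w(j)` for `j ∈ {1,…,N}` (1-indexed). -/
def val {N : ℕ} [NeZero N] (w : Equiv.Perm (Fin N)) (j : ℕ) : ℕ :=
  (w (pos N j) : ℕ) + 1

/-- The length of `w`: its number of inversions. -/
def len {N : ℕ} (w : Equiv.Perm (Fin N)) : ℕ :=
  (Finset.univ.filter fun p : Fin N × Fin N => p.1 < p.2 ∧ w p.2 < w p.1).card

/-- The longest permutation `w₀ : j ↦ N+1-j`. -/
def w0 (N : ℕ) : Equiv.Perm (Fin N) :=
  ⟨Fin.rev, Fin.rev, Fin.rev_rev, Fin.rev_rev⟩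

/-- The product `t_{a 0, b 0} ⋯ t_{a (i-1), b (i-1)}`. -/
def tProd (N : ℕ) [NeZero N] (a b : ℕ → ℕ) (i : ℕ) : Equiv.Perm (Fin N) :=
  ((List.range i).map fun j => t N (a j) (b j)).prod

/-- `r[k,m] = t_{k,k+1} t_{k,k+2} ⋯ t_{k,k+m}`, the (m+1)-cycle with
`r[k,m](k) = k+m` and `r[k,m](j) = j-1` for `k+1 ≤ j ≤ k+m`. -/
def rPerm (N k m : ℕ) [NeZero N] : Equiv.Perm (Fin N) :=
  ((List.range m).map fun i => t N k (k + 1 + i)).prod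

/-- `c[k,m] = t_{k,k+1} t_{k-1,k+1} ⋯ t_{k-m+1,k+1}`, the (m+1)-cycle with
`c[k,m](j) = j+1` for `k-m+1 ≤ j ≤ k` and `c[k,m](k+1) = k-m+1`. -/
def cPerm (N k m : ℕ) [NeZero N] : Equiv.Perm (Fin N) :=
  ((List.range m).map fun i => t N (k - i) (k + 1)).prod

/-- The conditions that `aᵢ ≤ k < bᵢ` (with all indices in `{1,…,N}`) and that
`ℓ(w t_{a₁ b₁} ⋯ t_{aᵢ bᵢ}) = ℓ(w) + i` for `1 ≤ i ≤ m`. -/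
def StepOK (N k m : ℕ) [NeZero N] (w : Equiv.Perm (Fin N)) (a b : ℕ → ℕ) : Prop :=
  (∀ i, i < m → 1 ≤ a i ∧ a i ≤ k ∧ k < b i ∧ b i ≤ N) ∧
  (∀ i, i ≤ m → len (w * tProd N a b i) = len w + i)

/-- `w →_{r[k,m]} w'`. -/
def RelR (N k m : ℕ) [NeZero N] (w w' : Equiv.Perm (Fin N)) : Prop :=
  ∃ a b : ℕ → ℕ, StepOK N k m w a b ∧ w' = w * tProd N a b m ∧
    (∀ i j, i < m → j < m → i ≠ j → b i ≠ b j)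

/-- `w →_{c[k,m]} w'`. -/
def RelC (N k m : ℕ) [NeZero N] (w w' : Equiv.Perm (Fin N)) : Prop :=
  ∃ a b : ℕ → ℕ, StepOK N k m w a b ∧ w' = w * tProd N a b m ∧
    (∀ i j, i < m → j < m → i ≠ j → a i ≠ a j)

/-- The divided difference operator `∂ᵢ f = (f - sᵢ·f)/(xᵢ - xᵢ₊₁)` (1-indexed `i`);
the quotient is exact, and is recovered here as the (unique) witness of divisibility. -/
noncomputable def divDiff {N : ℕ} [NeZero N] (i : ℕ) (f : MvPolynomial (Fin N) ℤ) :
    MvPolynomial (Fin N) ℤ :=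
  if h : (X (pos N i) - X (pos N (i + 1))) ∣ (f - rename (⇑(t N i (i + 1))) f) then
    h.choose
  else 0

/-- `∂_{a₁} ∘ ⋯ ∘ ∂_{a_p}` applied to `f`, for a word `l = [a₁,…,a_p]`. -/
noncomputable def divDiffWord {N : ℕ} [NeZero N] (l : List ℕ) (f : MvPolynomial (Fin N) ℤ) :
    MvPolynomial (Fin N) ℤ :=
  l.foldr divDiff f

/-- Auxiliary: produce a reduced word for `w` by repeatedly removing a descent. -/
def redWordAux (N : ℕ) [NeZero N] : ℕ → Equiv.Perm (Fin N) → List ℕ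
  | 0, _ => []
  | fuel + 1, w =>
    match ((List.range (N - 1)).map (· + 1)).find? (fun i => decide (val w (i + 1) < val w i)) with
    | none => []
    | some i => redWordAux N fuel (w * t N i (i + 1)) ++ [i]

/-- A canonical reduced word `(a₁,…,a_p)` for `w`, i.e. `w = s_{a₁} ⋯ s_{a_p}` with `p = ℓ(w)`. -/
def redWord (N : ℕ) [NeZero N] (w : Equiv.Perm (Fin N)) : List ℕ :=
  redWordAux N (N * N) w

/-- The staircase monomial `x₁^{N-1} x₂^{N-2} ⋯ x_{N-1}`. -/
noncomputable def staircase (N : ℕ) : MvPolynomial (Fin N) ℤ :=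
  ∏ i : Fin N, X i ^ (N - 1 - (i : ℕ))

/-- The Schubert polynomial `𝔖_w = ∂_{w⁻¹w₀}(x₁^{N-1} ⋯ x_{N-1})`. -/
noncomputable def schubertPoly (N : ℕ) [NeZero N] (w : Equiv.Perm (Fin N)) :
    MvPolynomial (Fin N) ℤ :=
  divDiffWord (redWord N (w⁻¹ * w0 N)) (staircase N)

/-- The ideal of `Rₙ` generated by the symmetric polynomials with zero constant term. -/
noncomputable def symIdeal (N : ℕ) : Ideal (MvPolynomial (Fin N) ℤ) :=
  Ideal.span {f : MvPolynomial (Fin N) ℤ | f.IsSymmetric ∧ constantCoeff f = 0}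

/-- The ring `Hₙ = Rₙ/𝒮`. -/
abbrev HRing (N : ℕ) := MvPolynomial (Fin N) ℤ ⧸ symIdeal N

/-- The class of the Schubert polynomial `𝔖_w` in `Hₙ`. -/
noncomputable def SS (N : ℕ) [NeZero N] (w : Equiv.Perm (Fin N)) : HRing N :=
  Ideal.Quotient.mk (symIdeal N) (schubertPoly N w)

/-- The complete homogeneous symmetric polynomial of degree `m` in `x₁,…,x_k`. -/
noncomputable def hPoly (N k m : ℕ) : MvPolynomial (Fin N) ℤ :=
  ∑ s ∈ (Finset.univ.filter fun i : Fin N => (i : ℕ) < k).sym m,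
    (Multiset.map X (s : Multiset (Fin N))).prod

/-- The elementary symmetric polynomial of degree `m` in `x₁,…,x_k`. -/
noncomputable def ePoly (N k m : ℕ) : MvPolynomial (Fin N) ℤ :=
  ∑ s ∈ (Finset.univ.filter fun i : Fin N => (i : ℕ) < k).powersetCard m, ∏ i ∈ s, X i

/-- Covering relation of the `k`-Bruhat order. -/
def kCover (N k : ℕ) [NeZero N] (w w' : Equiv.Perm (Fin N)) : Prop :=
  ∃ a b : ℕ, 1 ≤ a ∧ a ≤ k ∧ k < b ∧ b ≤ N ∧ w' = w * t N a b ∧ len w' = len w + 1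

/-- The (strict) `k`-Bruhat order `<ₖ`. -/
def kBruhat (N k : ℕ) [NeZero N] : Equiv.Perm (Fin N) → Equiv.Perm (Fin N) → Prop :=
  Relation.TransGen (kCover N k)

/-- The label `w⁽ⁱ⁺¹⁾(a_{i+1})` (0-indexed `i`) of the `(i+1)`-st step of a path. -/
def label {N : ℕ} [NeZero N] (w : Equiv.Perm (Fin N)) (a b : ℕ → ℕ) (i : ℕ) : ℕ :=
  val (w * tProd N a b (i + 1)) (a i)

/-- `(a,b)` encodes a path of length `m` in the `k`-Bruhat order from `w` to `w'`
(normalized so that `a i = b i = 0` for `i ≥ m`, making the encoding unique). -/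
def PathWit (N k m : ℕ) [NeZero N] (w w' : Equiv.Perm (Fin N))
    (ab : (ℕ → ℕ) × (ℕ → ℕ)) : Prop :=
  StepOK N k m w ab.1 ab.2 ∧ w' = w * tProd N ab.1 ab.2 m ∧
    ∀ i, m ≤ i → ab.1 i = 0 ∧ ab.2 i = 0

/-- Paths of length `m` in the `k`-Bruhat order from `w` to `w'` with strictly
increasing labels. -/
def IncPaths (N k m : ℕ) [NeZero N] (w w' : Equiv.Perm (Fin N)) :
    Set ((ℕ → ℕ) × (ℕ → ℕ)) :=
  {ab | PathWit N k m w w' ab ∧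
    ∀ i j, i < j → j < m → label w ab.1 ab.2 i < label w ab.1 ab.2 j}

/-- Paths of length `m` in the `k`-Bruhat order from `w` to `w'` with strictly
decreasing labels. -/
def DecPaths (N k m : ℕ) [NeZero N] (w w' : Equiv.Perm (Fin N)) :
    Set ((ℕ → ℕ) × (ℕ → ℕ)) :=
  {ab | PathWit N k m w w' ab ∧
    ∀ i j, i < j → j < m → label w ab.1 ab.2 j < label w ab.1 ab.2 i}


/-- The cycle `(x₁ x₂ … x_r)` (sending `x₁ ↦ x₂ ↦ ⋯ ↦ x_r ↦ x₁`), as a product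
of transpositions. -/
def cycleList (N : ℕ) [NeZero N] (l : List ℕ) : Equiv.Perm (Fin N) :=
  ((l.zip l.tail).map fun p => t N p.1 p.2).prod

/-- The Grassmannian permutation `h[k;p,q]` of descent `k` and hook shape `(p,1^{q-1})`:
the `(p+q)`-cycle `(k-q+1  k-q+2 … k  k+p  k+p-1 … k+1)`. -/
def hookPerm (N k p q : ℕ) [NeZero N] : Equiv.Perm (Fin N) :=
  cycleList N (((List.range q).map fun i => k - q + 1 + i) ++
    ((List.range p).reverse.map fun i => k + 1 + i))

/-- `w|ₚ ∈ S_{N-1}`: delete row `p` and column `w(p)` from the permutation matrix of `w`. -/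
def drop {N : ℕ} (w : Equiv.Perm (Fin (N + 1))) (p : Fin (N + 1)) : Equiv.Perm (Fin N) :=
  Equiv.removeNone (((finSuccEquiv' p).symm.trans (w : Fin (N + 1) ≃ Fin (N + 1))).trans
    (finSuccEquiv' (w p)))

/-- `lam` is a partition with at most `k` parts (1-indexed parts `lam 1 ≥ lam 2 ≥ ⋯`,
normalized by `lam 0 = 0`). -/
def IsPartFun (k : ℕ) (lam : ℕ → ℕ) : Prop :=
  lam 0 = 0 ∧ (∀ j, 1 ≤ j → lam (j + 1) ≤ lam j) ∧ ∀ j, k < j → lam j = 0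

/-- `h_d(x₁,…,x_k)` for an integer `d`, with `h_d = 0` for `d < 0`. -/
noncomputable def hPolyZ (N k : ℕ) (d : ℤ) : MvPolynomial (Fin N) ℤ :=
  if 0 ≤ d then hPoly N k d.toNat else 0

/-- The Schur polynomial `s_λ(x₁,…,x_k)`, via the Jacobi–Trudi determinant
`det(h_{λᵢ+j-i})_{1 ≤ i,j ≤ k}`. -/
noncomputable def schurPoly (N k : ℕ) (lam : ℕ → ℕ) : MvPolynomial (Fin N) ℤ :=
  (Matrix.of fun i j : Fin k =>
    hPolyZ N k ((lam ((i : ℕ) + 1) : ℤ) + (j : ℕ) - (i : ℕ))).det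

/-- `r_j = #{i : aᵢ = j}` (with `i` ranging over `0,…,m-1`, 0-indexed). -/
def rJ (a : ℕ → ℕ) (m j : ℕ) : ℕ := ((Finset.range m).filter fun i => a i = j).card

/-- `μ_j = r_{j+1} + ⋯ + r_k`. -/
def muJ (a : ℕ → ℕ) (m k j : ℕ) : ℕ :=
  if j = 0 then 0 else ∑ j' ∈ Finset.Icc (j + 1) k, rJ a m j'

/-- `λ_j = μ_j + r_j`. -/
def lamJ (a : ℕ → ℕ) (m k j : ℕ) : ℕ :=
  if j = 0 then 0 else muJ a m k j + rJ a m j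

/-- `d_j = #{i : bᵢ = N+1-j}` (with `i` ranging over `0,…,m-1`, 0-indexed). -/
def dJ (b : ℕ → ℕ) (m N j : ℕ) : ℕ :=
  ((Finset.range m).filter fun i => b i = N + 1 - j).card

/-- `μ′_j = d_{j+1} + ⋯ + d_{N-k}`. -/
def muJ' (b : ℕ → ℕ) (m N k j : ℕ) : ℕ :=
  if j = 0 then 0 else ∑ j' ∈ Finset.Icc (j + 1) (N - k), dJ b m N j'

/-- `λ′_j = μ′_j + d_j`. -/
def lamJ' (b : ℕ → ℕ) (m N k j : ℕ) : ℕ :=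
  if j = 0 then 0 else muJ' b m N k j + dJ b m N j

/-- The conjugate (transpose) partition: `νᵗ_j = #{i : νᵢ ≥ j}`, for `ν` with at
most `k` parts. -/
def conjPart (k : ℕ) (nu : ℕ → ℕ) (j : ℕ) : ℕ :=
  if j = 0 then 0 else ((Finset.Icc 1 k).filter fun i => j ≤ nu i).card

/-- `wv` is the Grassmannian permutation of descent `k` and shape `nu`:
`wv(j) = j + ν_{k+1-j}` for `1 ≤ j ≤ k`, and `wv` is increasing on `{k+1,…,N}`. -/
def IsGrassOf (N k : ℕ) [NeZero N] (nu : ℕ → ℕ) (wv : Equiv.Perm (Fin N)) : Prop :=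
  (∀ j, 1 ≤ j → j ≤ k → val wv j = j + nu (k + 1 - j)) ∧
  (∀ j, k < j → j < N → val wv j < val wv (j + 1))

/-- Paths of length `m` in the `k`-Bruhat order from `w` to `w'` whose labels
increase strictly for the first `p` steps and decrease strictly thereafter
(positions `p, p+1, …, m` being decreasing, 1-indexed). -/
def IncDecPaths (N k m p : ℕ) [NeZero N] (w w' : Equiv.Perm (Fin N)) :
    Set ((ℕ → ℕ) × (ℕ → ℕ)) :=
  {ab | PathWit N k m w w' ab ∧
    (∀ i j, i < j → j < p → label w ab.1 ab.2 i < label w ab.1 ab.2 j) ∧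
    (∀ i j, p - 1 ≤ i → i < j → j < m → label w ab.1 ab.2 j < label w ab.1 ab.2 i)}

/-- Paths of length `m` in the `k`-Bruhat order from `w` to `w'` whose labels
decrease strictly for the first `q` steps and increase strictly thereafter. -/
def DecIncPaths (N k m q : ℕ) [NeZero N] (w w' : Equiv.Perm (Fin N)) :
    Set ((ℕ → ℕ) × (ℕ → ℕ)) :=
  {ab | PathWit N k m w w' ab ∧
    (∀ i j, i < j → j < q → label w ab.1 ab.2 j < label w ab.1 ab.2 i) ∧
    (∀ i j, q - 1 ≤ i → i < j → j < m → label w ab.1 ab.2 i < label w ab.1 ab.2 j)}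


/-! ### Divided differences -/

lemma pos_ne {N : ℕ} [NeZero N] {i : ℕ} (h1 : 1 ≤ i) (h2 : i < N) : pos N i ≠ pos N (i + 1) := by
  intro h
  have := congrArg Fin.val h
  simp only [pos, Nat.add_sub_cancel] at this
  rw [Nat.mod_eq_of_lt (by omega), Nat.mod_eq_of_lt h2] at this
  omega

lemma pos_val {N : ℕ} [NeZero N] {i : ℕ} (h2 : i ≤ N) (h1 : 1 ≤ i) :
    ((pos N i : Fin N) : ℕ) = i - 1 := by
  simp only [pos]
  rw [Nat.mod_eq_of_lt (by omega)]

lemma dvd_sub_swap {N : ℕ} (a b : Fin N) (f : MvPolynomial (Fin N) ℤ) :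
    (X a - X b) ∣ (f - rename (⇑(Equiv.swap a b)) f) := by
  induction f using MvPolynomial.induction_on with
  | C r => simp
  | add p q hp hq =>
    have := dvd_add hp hq
    rw [map_add]
    convert this using 1
    ring
  | mul_X p k hp =>
    have h : (X a - X b : MvPolynomial (Fin N) ℤ) ∣ X k - X (Equiv.swap a b k) := by
      by_cases h1 : k = a
      · subst h1; simp
      · by_cases h2 : k = b
        · subst h2
          rw [Equiv.swap_apply_right]
          exact ⟨-1, by ring⟩
        · rw [Equiv.swap_apply_of_ne_of_ne h1 h2]; simp
    have := dvd_add (hp.mul_right (X k)) (h.mul_left (rename (⇑(Equiv.swap a b)) p))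
    rw [map_mul, rename_X]
    convert this using 1
    ring

lemma divDiff_spec {N : ℕ} [NeZero N] (i : ℕ) (f : MvPolynomial (Fin N) ℤ) :
    (X (pos N i) - X (pos N (i + 1))) * divDiff i f = f - rename (⇑(t N i (i + 1))) f := by
  have h : (X (pos N i) - X (pos N (i + 1))) ∣ (f - rename (⇑(t N i (i + 1))) f) :=
    dvd_sub_swap _ _ _
  rw [divDiff, dif_pos h]
  exact h.choose_spec.symm

lemma X_sub_ne {N : ℕ} {a b : Fin N} (h : a ≠ b) : (X a - X b : MvPolynomial (Fin N) ℤ) ≠ 0 := by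
  intro h'
  exact h (X_injective (sub_eq_zero.mp h'))

lemma divDiff_unique {N : ℕ} [NeZero N] {i : ℕ} (h1 : 1 ≤ i) (h2 : i < N)
    {f g : MvPolynomial (Fin N) ℤ}
    (h : (X (pos N i) - X (pos N (i + 1))) * g = f - rename (⇑(t N i (i + 1))) f) :
    divDiff i f = g := by
  apply mul_left_cancel₀ (X_sub_ne (pos_ne h1 h2))
  rw [divDiff_spec, h]

lemma divDiff_add {N : ℕ} [NeZero N] {i : ℕ} (h1 : 1 ≤ i) (h2 : i < N)
    (f g : MvPolynomial (Fin N) ℤ) : divDiff i (f + g) = divDiff i f + divDiff i g := by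
  apply divDiff_unique h1 h2
  rw [mul_add, divDiff_spec, divDiff_spec, map_add]
  ring

lemma divDiff_sub {N : ℕ} [NeZero N] {i : ℕ} (h1 : 1 ≤ i) (h2 : i < N)
    (f g : MvPolynomial (Fin N) ℤ) : divDiff i (f - g) = divDiff i f - divDiff i g := by
  apply divDiff_unique h1 h2
  rw [mul_sub, divDiff_spec, divDiff_spec, map_sub]
  ring

lemma divDiff_mul_symm {N : ℕ} [NeZero N] {i : ℕ} (h1 : 1 ≤ i) (h2 : i < N)
    (f g : MvPolynomial (Fin N) ℤ) (hg : g.IsSymmetric) :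
    divDiff i (f * g) = divDiff i f * g := by
  apply divDiff_unique h1 h2
  rw [← mul_assoc, divDiff_spec, map_mul, hg]
  ring

lemma divDiff_mem {N : ℕ} [NeZero N] {i : ℕ} (h1 : 1 ≤ i) (h2 : i < N)
    {f : MvPolynomial (Fin N) ℤ} (hf : f ∈ symIdeal N) : divDiff i f ∈ symIdeal N := by
  unfold symIdeal at hf
  induction hf using Submodule.span_induction with
  | mem x hx =>
    have := divDiff_mul_symm h1 h2 1 x hx.1
    rw [one_mul] at this
    rw [this]
    exact Ideal.mul_mem_left _ _ (Ideal.subset_span hx)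
  | zero =>
    have : divDiff i (0 : MvPolynomial (Fin N) ℤ) = 0 := divDiff_unique h1 h2 (by simp)
    rw [this]; exact zero_mem _
  | add x y _ _ hx hy =>
    rw [divDiff_add h1 h2]; exact add_mem hx hy
  | smul a x hx' hx =>
    -- twisted Leibniz rule
    have : divDiff i (a • x) =
        divDiff i a * x + rename (⇑(t N i (i + 1))) a * divDiff i x := by
      apply divDiff_unique h1 h2
      rw [mul_add, ← mul_assoc, divDiff_spec, mul_left_comm, divDiff_spec, smul_eq_mul, map_mul]
      ring
    rw [this]
    exact add_mem (Ideal.mul_mem_left _ _ hx') (Ideal.mul_mem_left _ _ hx)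

lemma rename_t_t {N : ℕ} [NeZero N] (i : ℕ) (f : MvPolynomial (Fin N) ℤ) :
    rename (⇑(t N i (i + 1))) (rename (⇑(t N i (i + 1))) f) = f := by
  rw [rename_rename]
  have : (⇑(t N i (i + 1)) ∘ ⇑(t N i (i + 1))) = id := by
    funext x; simp [t]
  rw [this, rename_id_apply]

lemma divDiff_inv {N : ℕ} [NeZero N] {i : ℕ} (h1 : 1 ≤ i) (h2 : i < N)
    (f : MvPolynomial (Fin N) ℤ) : rename (⇑(t N i (i + 1))) (divDiff i f) = divDiff i f := by
  symm
  apply divDiff_unique h1 h2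
  have := congrArg (rename (⇑(t N i (i + 1)))) (divDiff_spec i f)
  rw [map_mul, map_sub, map_sub, rename_t_t, rename_X, rename_X] at this
  simp only [t, Equiv.swap_apply_left, Equiv.swap_apply_right] at this
  simp only [t]
  linear_combination -this

lemma pos_ne_pos {N : ℕ} [NeZero N] {i j : ℕ} (h1 : 1 ≤ i) (h2 : i ≤ N) (h3 : 1 ≤ j) (h4 : j ≤ N)
    (h : i ≠ j) : pos N i ≠ pos N j := by
  intro h'
  have := congrArg Fin.val h'
  rw [pos_val h2 h1, pos_val h4 h3] at this
  omega

lemma divDiff_comm {N : ℕ} [NeZero N] {i j : ℕ} (h1 : 1 ≤ i) (h3 : i + 1 < j)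
    (h4 : j < N) (f : MvPolynomial (Fin N) ℤ) :
    divDiff i (divDiff j f) = divDiff j (divDiff i f) := by
  have n1 : pos N i ≠ pos N j := pos_ne_pos (by omega) (by omega) (by omega) (by omega) (by omega)
  have n2 : pos N i ≠ pos N (j + 1) :=
    pos_ne_pos (by omega) (by omega) (by omega) (by omega) (by omega)
  have n3 : pos N (i + 1) ≠ pos N j :=
    pos_ne_pos (by omega) (by omega) (by omega) (by omega) (by omega)
  have n4 : pos N (i + 1) ≠ pos N (j + 1) :=
    pos_ne_pos (by omega) (by omega) (by omega) (by omega) (by omega)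
  have hij : t N i (i + 1) * t N j (j + 1) = t N j (j + 1) * t N i (i + 1) := by
    ext x : 1
    simp only [t, Equiv.Perm.mul_apply, Equiv.swap_apply_def]
    split_ifs <;> simp_all
  have hr : rename (⇑(t N i (i + 1))) (rename (⇑(t N j (j + 1))) f) =
      rename (⇑(t N j (j + 1))) (rename (⇑(t N i (i + 1))) f) := by
    rw [rename_rename, rename_rename, ← Equiv.Perm.coe_mul, ← Equiv.Perm.coe_mul, hij]
  apply mul_left_cancel₀ (X_sub_ne (pos_ne h1 (by omega)))
  apply mul_left_cancel₀ (X_sub_ne (pos_ne (N := N) (i := j) (by omega) h4))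
  have e1 := divDiff_spec i (divDiff j f)
  have e2 := divDiff_spec j (divDiff i f)
  have e3 := divDiff_spec i f
  have e4 := divDiff_spec j f
  have e5 := congrArg (rename (⇑(t N j (j + 1)))) e3
  have e6 := congrArg (rename (⇑(t N i (i + 1)))) e4
  rw [map_mul, map_sub, map_sub, rename_X, rename_X] at e5 e6
  have a1 : t N i (i + 1) (pos N j) = pos N j := Equiv.swap_apply_of_ne_of_ne n1.symm n3.symm
  have a2 : t N i (i + 1) (pos N (j + 1)) = pos N (j + 1) :=
    Equiv.swap_apply_of_ne_of_ne n2.symm n4.symm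
  have a3 : t N j (j + 1) (pos N i) = pos N i := Equiv.swap_apply_of_ne_of_ne n1 n2
  have a4 : t N j (j + 1) (pos N (i + 1)) = pos N (i + 1) :=
    Equiv.swap_apply_of_ne_of_ne n3 n4
  rw [a3, a4] at e5
  rw [a1, a2, hr] at e6
  linear_combination (X (pos N j) - X (pos N (j + 1))) * e1 -
    (X (pos N i) - X (pos N (i + 1))) * e2 + e4 - e6 - e3 + e5

/-- One half of the braid relation: expansion of `∂_i ∂_j ∂_i` for adjacent transpositions. -/
lemma braid_aux {N : ℕ} (a b c : Fin N) (σ τ : Equiv.Perm (Fin N))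
    (sa : σ a = b) (sb : σ b = a) (sc : σ c = c) (ta : τ a = a) (tb : τ b = c) (tc : τ c = b)
    (f g h k : MvPolynomial (Fin N) ℤ)
    (e1 : (X a - X b) * g = f - rename σ f) (e1' : rename σ g = g)
    (e2 : (X b - X c) * h = g - rename τ g)
    (e3 : (X a - X b) * k = h - rename σ h) :
    (X a - X b) * (X a - X c) * (X b - X c) * k = f - rename σ f - rename τ f
      + rename τ (rename σ f) + rename σ (rename τ f) - rename σ (rename τ (rename σ f)) := by
  have e4 := congrArg (rename τ) e1
  have e5 := congrArg (rename σ) e2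
  have e6 := congrArg (rename σ) e4
  simp only [map_mul, map_sub, rename_X, sa, sb, sc, ta, tb, tc, e1'] at e4 e5 e6
  linear_combination (X a - X c) * (X b - X c) * e3 + (X a - X c) * e2 - (X b - X c) * e5
    + e1 - e4 + e6

lemma divDiff_braid {N : ℕ} [NeZero N] {i : ℕ} (h1 : 1 ≤ i) (h2 : i + 1 < N)
    (f : MvPolynomial (Fin N) ℤ) :
    divDiff i (divDiff (i + 1) (divDiff i f)) =
      divDiff (i + 1) (divDiff i (divDiff (i + 1) f)) := by
  have n1 : pos N i ≠ pos N (i + 1) := pos_ne h1 (by omega)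
  have n2 : pos N (i + 1) ≠ pos N (i + 1 + 1) := pos_ne (by omega) h2
  have n3 : pos N i ≠ pos N (i + 1 + 1) :=
    pos_ne_pos (by omega) (by omega) (by omega) (by omega) (by omega)
  have sa : t N i (i + 1) (pos N i) = pos N (i + 1) := Equiv.swap_apply_left _ _
  have sb : t N i (i + 1) (pos N (i + 1)) = pos N i := Equiv.swap_apply_right _ _
  have sc : t N i (i + 1) (pos N (i + 1 + 1)) = pos N (i + 1 + 1) :=
    Equiv.swap_apply_of_ne_of_ne n3.symm n2.symm
  have ta : t N (i + 1) (i + 1 + 1) (pos N i) = pos N i :=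
    Equiv.swap_apply_of_ne_of_ne n1 n3
  have tb : t N (i + 1) (i + 1 + 1) (pos N (i + 1)) = pos N (i + 1 + 1) :=
    Equiv.swap_apply_left _ _
  have tc : t N (i + 1) (i + 1 + 1) (pos N (i + 1 + 1)) = pos N (i + 1) :=
    Equiv.swap_apply_right _ _
  have key : t N i (i + 1) * t N (i + 1) (i + 1 + 1) * t N i (i + 1) =
      t N (i + 1) (i + 1 + 1) * t N i (i + 1) * t N (i + 1) (i + 1 + 1) := by
    ext x : 1
    simp only [Equiv.Perm.mul_apply]
    by_cases x1 : x = pos N i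
    · subst x1; simp only [sa, sb, sc, ta, tb, tc]
    by_cases x2 : x = pos N (i + 1)
    · subst x2; simp only [sa, sb, sc, ta, tb, tc]
    by_cases x3 : x = pos N (i + 1 + 1)
    · subst x3; simp only [sa, sb, sc, ta, tb, tc]
    have y1 : t N i (i + 1) x = x := Equiv.swap_apply_of_ne_of_ne x1 x2
    have y2 : t N (i + 1) (i + 1 + 1) x = x := Equiv.swap_apply_of_ne_of_ne x2 x3
    simp only [y1, y2]
  have hr : rename (⇑(t N i (i + 1))) (rename (⇑(t N (i + 1) (i + 1 + 1)))
      (rename (⇑(t N i (i + 1))) f)) = rename (⇑(t N (i + 1) (i + 1 + 1)))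
      (rename (⇑(t N i (i + 1))) (rename (⇑(t N (i + 1) (i + 1 + 1))) f)) := by
    simp only [rename_rename]
    simp only [← Equiv.Perm.coe_mul]
    rw [← mul_assoc, key, mul_assoc]
  have b1 := braid_aux (pos N i) (pos N (i + 1)) (pos N (i + 1 + 1)) _ _ sa sb sc ta tb tc f _ _ _
    (divDiff_spec i f) (divDiff_inv h1 (by omega) f) (divDiff_spec (i + 1) _) (divDiff_spec i _)
  have neg : ∀ a b : Fin N, ∀ p q : MvPolynomial (Fin N) ℤ, (X a - X b) * p = q →
      (X b - X a) * (-p) = q := fun a b p q h => by rw [← h]; ring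
  have hn : ∀ p : MvPolynomial (Fin N) ℤ, ∀ σ : Equiv.Perm (Fin N), rename σ (-p) = - rename σ p :=
    fun p σ => map_neg _ _
  have b2 := braid_aux (pos N (i + 1 + 1)) (pos N (i + 1)) (pos N i) _ _ tc tb ta sc sb sa f
    (-divDiff (i + 1) f) (divDiff i (divDiff (i + 1) f))
    (-divDiff (i + 1) (divDiff i (divDiff (i + 1) f)))
    (neg _ _ _ _ (divDiff_spec (i + 1) f))
    (by rw [hn, divDiff_inv (by omega) h2 f])
    (by
      have := divDiff_spec i (divDiff (i + 1) f)
      rw [hn]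
      linear_combination -this)
    (neg _ _ _ _ (divDiff_spec (i + 1) _))
  rw [← hr] at b2
  apply mul_left_cancel₀ (X_sub_ne n1)
  apply mul_left_cancel₀ (X_sub_ne n2)
  apply mul_left_cancel₀ (X_sub_ne n3)
  linear_combination b1 - b2

/-! ### Lengths and independence of the reduced word -/

/-- `i` is a descent of `w` (1-indexed). -/
def Desc {N : ℕ} [NeZero N] (w : Equiv.Perm (Fin N)) (i : ℕ) : Prop :=
  1 ≤ i ∧ i < N ∧ w (pos N (i + 1)) < w (pos N i)

lemma len_lt {N : ℕ} [NeZero N] {w : Equiv.Perm (Fin N)} {i : ℕ} (h : Desc w i) :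
    len (w * t N i (i + 1)) < len w := by
  obtain ⟨h1, h2, h3⟩ := h
  have v1 := pos_val (N := N) (i := i) (by omega) h1
  have v2 := pos_val (N := N) (i := i + 1) (by omega) (by omega)
  unfold len
  have hinj : Function.Injective (fun p : Fin N × Fin N => (t N i (i + 1) p.1, t N i (i + 1) p.2)) := by
    rintro ⟨a, b⟩ ⟨c, d⟩ h
    simp only [Prod.mk.injEq, EmbeddingLike.apply_eq_iff_eq] at h
    exact Prod.ext h.1 h.2
  rw [← Finset.card_image_of_injective _ hinj]
  apply Finset.card_lt_card
  rw [Finset.ssubset_iff_of_subset]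
  · refine ⟨(pos N i, pos N (i + 1)), ?_, ?_⟩
    · simp only [Finset.mem_filter, Finset.mem_univ, true_and]
      refine ⟨?_, h3⟩
      rw [Fin.lt_def]; omega
    · simp only [Finset.mem_image, Finset.mem_filter, Finset.mem_univ, true_and, not_exists, not_and,
        Prod.mk.injEq, Prod.forall]
      intro a b hab ha hb
      have ha' : a = pos N (i + 1) := by
        apply (t N i (i + 1)).injective; rw [ha]; exact (Equiv.swap_apply_right _ _).symm
      have hb' : b = pos N i := by
        apply (t N i (i + 1)).injective; rw [hb]; exact (Equiv.swap_apply_left _ _).symm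
      have := hab.1
      rw [ha', hb', Fin.lt_def] at this
      omega
  · intro p hp
    simp only [Finset.mem_image, Finset.mem_filter, Finset.mem_univ, true_and, Prod.exists] at hp ⊢
    obtain ⟨a, b, ⟨hab, hw⟩, rfl⟩ := hp
    refine ⟨?_, hw⟩
    simp only [Equiv.Perm.mul_apply] at hw
    by_contra hcon
    simp only [t, Equiv.swap_apply_def] at hcon hw
    simp only [Fin.lt_def, Fin.ext_iff] at *
    split_ifs at hcon hw <;> omega

lemma len_le {N : ℕ} (w : Equiv.Perm (Fin N)) : len w ≤ N * N := by
  unfold len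
  refine (Finset.card_le_univ _).trans ?_
  simp

lemma find_some {N : ℕ} [NeZero N] {w : Equiv.Perm (Fin N)} {i : ℕ}
    (h : ((List.range (N - 1)).map (· + 1)).find?
      (fun i => decide (val w (i + 1) < val w i)) = some i) : Desc w i := by
  have h1 := List.find?_some h
  have h2 := List.mem_of_find?_eq_some h
  simp only [List.mem_map, List.mem_range] at h2
  obtain ⟨j, hj, rfl⟩ := h2
  refine ⟨by omega, by omega, ?_⟩
  have h3 := of_decide_eq_true h1
  simp only [val] at h3
  rw [Fin.lt_def]; omega

lemma find_none {N : ℕ} [NeZero N] {w : Equiv.Perm (Fin N)}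
    (h : ((List.range (N - 1)).map (· + 1)).find?
      (fun i => decide (val w (i + 1) < val w i)) = none) (i : ℕ) : ¬ Desc w i := by
  rintro ⟨h1, h2, h3⟩
  rw [List.find?_eq_none] at h
  apply h i
  · simp only [List.mem_map, List.mem_range]
    exact ⟨i - 1, by omega, by omega⟩
  · apply decide_eq_true
    simp only [val]
    rw [Fin.lt_def] at h3; omega

lemma redWordAux_fuel {N : ℕ} [NeZero N] : ∀ (k l : ℕ) (w : Equiv.Perm (Fin N)),
    len w ≤ k → len w ≤ l → redWordAux N k w = redWordAux N l w := by
  have key : ∀ (l : ℕ) (w : Equiv.Perm (Fin N)), len w = 0 → redWordAux N l w = [] := by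
    intro l w hw
    cases l with
    | zero => rfl
    | succ l =>
      rw [redWordAux]
      split
      · rfl
      · rename_i i hi
        have := len_lt (find_some hi)
        omega
  intro k
  induction k with
  | zero =>
    intro l w hk hl
    rw [key l w (by omega)]; rfl
  | succ k ih =>
    intro l w hk hl
    cases l with
    | zero => rw [key _ w (by omega)]; rfl
    | succ l =>
      rw [redWordAux, redWordAux]
      split
      · rfl
      · rename_i i hi
        have := len_lt (find_some hi)
        rw [ih l _ (by omega) (by omega)]

lemma redWord_cases {N : ℕ} [NeZero N] (w : Equiv.Perm (Fin N)) :
    (redWord N w = [] ∧ ∀ i, ¬ Desc w i) ∨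
    ∃ i, Desc w i ∧ redWord N w = redWord N (w * t N i (i + 1)) ++ [i] := by
  have h0 : redWord N w = redWordAux N (N * N + 1) w :=
    redWordAux_fuel _ _ _ (len_le w) ((len_le w).trans (Nat.le_succ _))
  rw [redWordAux] at h0
  split at h0
  · rename_i hi
    exact Or.inl ⟨h0, find_none hi⟩
  · rename_i i hi
    exact Or.inr ⟨i, find_some hi, h0⟩

/-- The operator `∂_w`. -/
noncomputable def opA {N : ℕ} [NeZero N] (w : Equiv.Perm (Fin N)) (f : MvPolynomial (Fin N) ℤ) :
    MvPolynomial (Fin N) ℤ := divDiffWord (redWord N w) f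

lemma opA_cases {N : ℕ} [NeZero N] (w : Equiv.Perm (Fin N)) :
    ((∀ f, opA w f = f) ∧ ∀ i, ¬ Desc w i) ∨
    ∃ i, Desc w i ∧ ∀ f, opA w f = opA (w * t N i (i + 1)) (divDiff i f) := by
  rcases redWord_cases w with ⟨h, h'⟩ | ⟨i, hi, h⟩
  · refine Or.inl ⟨fun f => ?_, h'⟩
    simp [opA, h, divDiffWord]
  · refine Or.inr ⟨i, hi, fun f => ?_⟩
    simp [opA, h, divDiffWord]

lemma t_apply_of_ne {N : ℕ} [NeZero N] {i j : ℕ} (h1 : 1 ≤ i) (h2 : i < N) (h3 : 1 ≤ j) (h4 : j ≤ N)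
    (h5 : j ≠ i) (h6 : j ≠ i + 1) : t N i (i + 1) (pos N j) = pos N j :=
  Equiv.swap_apply_of_ne_of_ne (pos_ne_pos h3 h4 h1 (by omega) h5)
    (pos_ne_pos h3 h4 (by omega) (by omega) h6)

lemma t_left {N : ℕ} [NeZero N] (i : ℕ) : t N i (i + 1) (pos N i) = pos N (i + 1) :=
  Equiv.swap_apply_left _ _

lemma t_right {N : ℕ} [NeZero N] (i : ℕ) : t N i (i + 1) (pos N (i + 1)) = pos N i :=
  Equiv.swap_apply_right _ _

lemma t_comm {N : ℕ} [NeZero N] {i j : ℕ} (h1 : 1 ≤ i) (h3 : i + 1 < j) (h4 : j < N) :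
    t N i (i + 1) * t N j (j + 1) = t N j (j + 1) * t N i (i + 1) := by
  have n1 : pos N i ≠ pos N j := pos_ne_pos (by omega) (by omega) (by omega) (by omega) (by omega)
  have n2 : pos N i ≠ pos N (j + 1) :=
    pos_ne_pos (by omega) (by omega) (by omega) (by omega) (by omega)
  have n3 : pos N (i + 1) ≠ pos N j :=
    pos_ne_pos (by omega) (by omega) (by omega) (by omega) (by omega)
  have n4 : pos N (i + 1) ≠ pos N (j + 1) :=
    pos_ne_pos (by omega) (by omega) (by omega) (by omega) (by omega)
  ext x : 1
  simp only [t, Equiv.Perm.mul_apply, Equiv.swap_apply_def]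
  split_ifs <;> simp_all

lemma t_braid {N : ℕ} [NeZero N] {i : ℕ} (h1 : 1 ≤ i) (h2 : i + 1 < N) :
    t N i (i + 1) * t N (i + 1) (i + 1 + 1) * t N i (i + 1) =
      t N (i + 1) (i + 1 + 1) * t N i (i + 1) * t N (i + 1) (i + 1 + 1) := by
  have n1 : pos N i ≠ pos N (i + 1) := pos_ne h1 (by omega)
  have n2 : pos N (i + 1) ≠ pos N (i + 1 + 1) := pos_ne (by omega) h2
  have n3 : pos N i ≠ pos N (i + 1 + 1) :=
    pos_ne_pos (by omega) (by omega) (by omega) (by omega) (by omega)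
  ext x : 1
  simp only [t, Equiv.Perm.mul_apply, Equiv.swap_apply_def]
  split_ifs <;> simp_all

/-- Independence of the reduced word. -/
lemma opA_desc {N : ℕ} [NeZero N] : ∀ (k : ℕ) (w : Equiv.Perm (Fin N)), len w = k → ∀ i, Desc w i →
    ∀ f, opA w f = opA (w * t N i (i + 1)) (divDiff i f) := by
  intro k
  induction k using Nat.strong_induction_on with
  | _ k ih =>
  intro w hw i hi f
  have IH : ∀ u : Equiv.Perm (Fin N), len u < len w → ∀ i, Desc u i →
    ∀ f, opA u f = opA (u * t N i (i + 1)) (divDiff i f) := fun u hu => ih (len u) (hw ▸ hu) u rfl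
  rcases opA_cases w with ⟨_, h⟩ | ⟨j, hj, h⟩
  · exact absurd hi (h i)
  rw [h]
  -- far apart
  have far : ∀ i j, Desc w i → Desc w j → i + 1 < j →
      opA (w * t N j (j + 1)) (divDiff j f) = opA (w * t N i (i + 1)) (divDiff i f) := by
    intro i j hi hj hij
    obtain ⟨i1, i2, i3⟩ := id hi
    obtain ⟨j1, j2, j3⟩ := id hj
    have d1 : Desc (w * t N j (j + 1)) i := by
      refine ⟨i1, i2, ?_⟩
      rw [Equiv.Perm.mul_apply, Equiv.Perm.mul_apply, t_apply_of_ne, t_apply_of_ne] <;>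
        first | exact i3 | omega
    have d2 : Desc (w * t N i (i + 1)) j := by
      refine ⟨j1, j2, ?_⟩
      rw [Equiv.Perm.mul_apply, Equiv.Perm.mul_apply, t_apply_of_ne, t_apply_of_ne] <;>
        first | exact j3 | omega
    rw [IH _ (len_lt hj) i d1, IH _ (len_lt hi) j d2, divDiff_comm i1 hij j2, mul_assoc, mul_assoc,
      t_comm i1 hij j2]
  have near : ∀ i, Desc w i → Desc w (i + 1) →
      opA (w * t N (i + 1) (i + 1 + 1)) (divDiff (i + 1) f) =
        opA (w * t N i (i + 1)) (divDiff i f) := by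
    intro i hi hj
    obtain ⟨i1, i2, i3⟩ := id hi
    obtain ⟨j1, j2, j3⟩ := id hj
    have a1 : t N (i + 1) (i + 1 + 1) (pos N i) = pos N i := by
      apply t_apply_of_ne <;> omega
    have a2 : t N i (i + 1) (pos N (i + 1 + 1)) = pos N (i + 1 + 1) := by
      apply t_apply_of_ne <;> omega
    have d1 : Desc (w * t N (i + 1) (i + 1 + 1)) i := by
      refine ⟨i1, i2, ?_⟩
      rw [Equiv.Perm.mul_apply, Equiv.Perm.mul_apply, t_left, a1]
      exact j3.trans i3
    have d1' : Desc (w * t N (i + 1) (i + 1 + 1) * t N i (i + 1)) (i + 1) := by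
      refine ⟨j1, j2, ?_⟩
      simp only [Equiv.Perm.mul_apply, t_left, t_right, a1, a2]
      exact i3
    have d2 : Desc (w * t N i (i + 1)) (i + 1) := by
      refine ⟨j1, j2, ?_⟩
      rw [Equiv.Perm.mul_apply, Equiv.Perm.mul_apply, t_right, a2]
      exact j3.trans i3
    have d2' : Desc (w * t N i (i + 1) * t N (i + 1) (i + 1 + 1)) i := by
      refine ⟨i1, i2, ?_⟩
      simp only [Equiv.Perm.mul_apply, t_left, t_right, a1, a2]
      exact j3
    rw [IH _ (len_lt hj) i d1, IH _ ((len_lt d1).trans (len_lt hj)) (i + 1) d1',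
      IH _ (len_lt hi) (i + 1) d2, IH _ ((len_lt d2).trans (len_lt hi)) i d2',
      divDiff_braid i1 j2]
    congr 1
    have := t_braid i1 j2
    simp only [mul_assoc] at this ⊢
    rw [this]
  rcases lt_trichotomy i j with hij | hij | hij
  · by_cases hh : j = i + 1
    · subst hh; exact near i hi hj
    · exact far i j hi hj (by omega)
  · subst hij; rfl
  · by_cases hh : i = j + 1
    · subst hh; exact (near j hj hi).symm
    · exact (far j i hj hi (by omega)).symm

lemma opA_sub {N : ℕ} [NeZero N] : ∀ (k : ℕ) (w : Equiv.Perm (Fin N)), len w = k → ∀ f g,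
    opA w (f - g) = opA w f - opA w g := by
  intro k
  induction k using Nat.strong_induction_on with
  | _ k ih =>
  intro w hw f g
  rcases opA_cases w with ⟨h, _⟩ | ⟨j, hj, h⟩
  · simp only [h]
  · rw [h, h, h, divDiff_sub hj.1 hj.2.1, ih _ (hw ▸ len_lt hj) _ rfl]

lemma opA_mem {N : ℕ} [NeZero N] : ∀ (k : ℕ) (w : Equiv.Perm (Fin N)), len w = k →
    ∀ f ∈ symIdeal N, opA w f ∈ symIdeal N := by
  intro k
  induction k using Nat.strong_induction_on with
  | _ k ih =>
  intro w hw f hf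
  rcases opA_cases w with ⟨h, _⟩ | ⟨j, hj, h⟩
  · rwa [h]
  · rw [h]
    exact ih _ (hw ▸ len_lt hj) _ rfl _ (divDiff_mem hj.1 hj.2.1 hf)

/-! ### The automorphism `x_i ↦ -x_{n+1-i}` -/

/-- The map `x_i ↦ -x_{n+1-i}`. -/
noncomputable def psi (N : ℕ) : MvPolynomial (Fin N) ℤ →ₐ[ℤ] MvPolynomial (Fin N) ℤ :=
  aeval (fun i => - X (Fin.rev i))

lemma psi_X {N : ℕ} (i : Fin N) : psi N (X i) = - X (Fin.rev i) := by simp [psi]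

lemma psi_psi (N : ℕ) (f : MvPolynomial (Fin N) ℤ) : psi N (psi N f) = f := by
  have : (psi N).comp (psi N) = AlgHom.id ℤ _ := by
    ext i : 1
    simp [psi_X]
  exact DFunLike.congr_fun this f

lemma psi_rename {N : ℕ} (σ : Equiv.Perm (Fin N)) (f : MvPolynomial (Fin N) ℤ) :
    psi N (rename σ f) = rename (⇑(w0 N * σ * w0 N)) (psi N f) := by
  have : (psi N).comp (rename σ) = (rename (⇑(w0 N * σ * w0 N))).comp (psi N) := by
    ext i : 1
    simp [psi_X, w0]
  exact DFunLike.congr_fun this f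

lemma rev_pos {N : ℕ} [NeZero N] {i : ℕ} (h1 : 1 ≤ i) (h2 : i ≤ N) :
    Fin.rev (pos N i) = pos N (N + 1 - i) := by
  rw [Fin.ext_iff, Fin.val_rev, pos_val h2 h1, pos_val (by omega) (by omega)]
  omega

lemma w0_apply {N : ℕ} (x : Fin N) : w0 N x = Fin.rev x := rfl

lemma w0_w0 (N : ℕ) : w0 N * w0 N = 1 := by
  ext x : 1
  simp [w0_apply]

lemma conj_t {N : ℕ} [NeZero N] {i : ℕ} (h1 : 1 ≤ i) (h2 : i < N) :
    w0 N * t N i (i + 1) * w0 N = t N (N - i) (N - i + 1) := by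
  have hi : (w0 N)⁻¹ = w0 N := by rw [inv_eq_iff_mul_eq_one, w0_w0]
  have := Equiv.swap_apply_apply (w0 N) (pos N i) (pos N (i + 1))
  rw [hi] at this
  unfold t
  rw [← this, w0_apply, w0_apply, rev_pos h1 (by omega), rev_pos (by omega) (by omega),
    Equiv.swap_comm]
  congr 2 <;> omega

lemma psi_divDiff {N : ℕ} [NeZero N] {i : ℕ} (h1 : 1 ≤ i) (h2 : i < N)
    (f : MvPolynomial (Fin N) ℤ) : psi N (divDiff i f) = divDiff (N - i) (psi N f) := by
  symm
  apply divDiff_unique (by omega) (by omega)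
  have := congrArg (psi N) (divDiff_spec i f)
  rw [map_mul, map_sub, map_sub, psi_rename, psi_X, psi_X, rev_pos h1 (by omega),
    rev_pos (by omega) (by omega), conj_t h1 h2] at this
  rw [← this, show N + 1 - (i + 1) = N - i by omega, show N + 1 - i = N - i + 1 by omega]
  ring

lemma desc_conj {N : ℕ} [NeZero N] {w : Equiv.Perm (Fin N)} {i : ℕ} (h : Desc w i) :
    Desc (w0 N * w * w0 N) (N - i) := by
  obtain ⟨h1, h2, h3⟩ := h
  refine ⟨by omega, by omega, ?_⟩
  simp only [Equiv.Perm.mul_apply, w0_apply]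
  rw [rev_pos (by omega) (by omega), rev_pos (by omega) (by omega), Fin.rev_lt_rev,
    show N + 1 - (N - i) = i + 1 by omega, show N + 1 - (N - i + 1) = i by omega]
  exact h3

lemma psi_opA {N : ℕ} [NeZero N] : ∀ (k : ℕ) (w : Equiv.Perm (Fin N)), len w = k → ∀ f,
    psi N (opA w f) = opA (w0 N * w * w0 N) (psi N f) := by
  intro k
  induction k using Nat.strong_induction_on with
  | _ k ih =>
  intro w hw f
  rcases opA_cases w with ⟨h, h'⟩ | ⟨j, hj, h⟩
  · rw [h]
    rcases opA_cases (w0 N * w * w0 N) with ⟨g, _⟩ | ⟨j, hj, _⟩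
    · rw [g]
    · have := desc_conj hj
      have e : w0 N * (w0 N * w * w0 N) * w0 N = w := by
        simp only [mul_assoc, w0_w0, mul_one]
        rw [← mul_assoc, w0_w0, one_mul]
      rw [e] at this
      exact absurd this (h' _)
  · rw [h, ih _ (hw ▸ len_lt hj) _ rfl, opA_desc _ _ rfl _ (desc_conj hj), psi_divDiff hj.1 hj.2.1,
      ← conj_t hj.1 hj.2.1]
    congr 1
    simp only [mul_assoc]
    congr 2
    rw [← mul_assoc (w0 N) (w0 N), w0_w0, one_mul]

/-! ### The staircase monomial modulo the ideal -/

lemma prod_T_add (N : ℕ) :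
    ∏ i : Fin N, (Polynomial.X + Polynomial.C (Ideal.Quotient.mk (symIdeal N) (X i))) =
      (Polynomial.X : Polynomial (HRing N)) ^ N := by
  have h := congrArg (Polynomial.map (Ideal.Quotient.mk (symIdeal N)))
    (MvPolynomial.prod_C_add_X_eq_sum_esymm (R := ℤ) (σ := Fin N))
  rw [Polynomial.map_prod, Polynomial.map_sum] at h
  simp only [Polynomial.map_add, Polynomial.map_X, Polynomial.map_C, Polynomial.map_mul,
    Polynomial.map_pow] at h
  rw [h, Finset.sum_eq_single 0]
  · simp
  · intro j _ hj
    have : esymm (Fin N) ℤ j ∈ symIdeal N := by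
      apply Ideal.subset_span
      refine ⟨esymm_isSymmetric _ _ _, ?_⟩
      have hz : ∀ s ∈ Finset.powersetCard j (Finset.univ : Finset (Fin N)),
          constantCoeff (∏ i ∈ s, X i : MvPolynomial (Fin N) ℤ) = 0 := by
        intro s hs
        rw [map_prod]
        have hc := (Finset.mem_powersetCard.mp hs).2
        obtain ⟨x, hx⟩ : s.Nonempty := by
          rw [← Finset.card_pos]; omega
        exact Finset.prod_eq_zero hx (by simp)
      rw [esymm, map_sum]
      exact Finset.sum_eq_zero hz
    rw [Ideal.Quotient.eq_zero_iff_mem.mpr this]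
    simp
  · simp

/-- The main computation: in a commutative ring with `∏ (T + y_j) = T^N`, the monomial
`y_0^{N-1} ⋯ y_{N-1}^0` is killed by all `y_i`. -/
lemma stair_aux {A : Type*} [CommRing A] (N : ℕ) (y : ℕ → A)
    (h : ∏ i ∈ Finset.range N, (Polynomial.X + Polynomial.C (y i)) = Polynomial.X ^ N) :
    ∀ k ≤ N, (Polynomial.C (∏ i ∈ Finset.range k, y i ^ (N - 1 - i)) *
      ∏ i ∈ Finset.Ico k N, (Polynomial.X + Polynomial.C (y i)) =
      Polynomial.C (∏ i ∈ Finset.range k, y i ^ (N - 1 - i)) * Polynomial.X ^ (N - k)) ∧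
      ∀ j < k, (∏ i ∈ Finset.range k, y i ^ (N - 1 - i)) * y j = 0 := by
  intro k
  induction k with
  | zero =>
    intro _
    simpa using h
  | succ k ih =>
    intro hk
    obtain ⟨h1, h2⟩ := ih (by omega)
    set M := ∏ i ∈ Finset.range k, y i ^ (N - 1 - i) with hM
    rw [Finset.prod_range_succ, ← hM]
    rw [Finset.prod_eq_prod_Ico_succ_bot (by omega : k < N)] at h1
    have h3 : M * y k ^ (N - k) = 0 := by
      have := congrArg (Polynomial.eval (- y k)) h1
      simp only [Polynomial.eval_mul, Polynomial.eval_C, Polynomial.eval_add, Polynomial.eval_X,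
        Polynomial.eval_pow, neg_add_cancel, zero_mul, mul_zero] at this
      rw [neg_pow, mul_left_comm] at this
      have h4 := congrArg (fun z => (-1) ^ (N - k) * z) this
      simp only [mul_zero, ← mul_assoc, ← mul_pow] at h4
      simpa using h4.symm
    have h5 : M * y k ^ (N - 1 - k) * y k = 0 := by
      rw [mul_assoc, ← pow_succ, show N - 1 - k + 1 = N - k by omega, h3]
    refine ⟨?_, ?_⟩
    · have h6 : (Polynomial.C (M * y k ^ (N - 1 - k)) * Polynomial.C (y k) : Polynomial A) = 0 := by
        rw [← Polynomial.C_mul, h5, Polynomial.C_0]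
      have h7 := congrArg (fun z => Polynomial.C (y k ^ (N - 1 - k)) * z) h1
      have h8 : ∀ p q : Polynomial A, Polynomial.X * p = Polynomial.X * q → p = q := by
        intro p q hpq
        ext m
        have := congrArg (fun z => Polynomial.coeff z (m + 1)) hpq
        simpa only [Polynomial.coeff_X_mul] using this
      apply h8
      have e : N - k = N - (k + 1) + 1 := by omega
      rw [e, pow_succ] at h7
      rw [Polynomial.C_mul] at h6 ⊢
      linear_combination h7 - (∏ i ∈ Finset.Ico (k + 1) N, (Polynomial.X + Polynomial.C (y i))) * h6
    · intro j hj
      rcases Nat.lt_succ_iff_lt_or_eq.mp hj with hj | rfl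
      · rw [mul_right_comm, h2 j hj, zero_mul]
      · exact h5

lemma X_mul_staircase (N : ℕ) (j : Fin N) : staircase N * X j ∈ symIdeal N := by
  rw [← Ideal.Quotient.eq_zero_iff_mem, map_mul, staircase, map_prod]
  let y : ℕ → HRing N := fun i =>
    if h : i < N then Ideal.Quotient.mk (symIdeal N) (X ⟨i, h⟩) else 0
  have hy : ∀ i : Fin N, Ideal.Quotient.mk (symIdeal N) (X i) = y i := by
    intro i
    simp [y]
  have h := prod_T_add N
  simp only [hy] at h
  rw [Fin.prod_univ_eq_prod_range (fun i => Polynomial.X + Polynomial.C (y i)) N] at h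
  have := (stair_aux N y h N le_rfl).2 j j.2
  simp only [map_pow, hy]
  rw [Fin.prod_univ_eq_prod_range (fun i => y i ^ (N - 1 - i)) N]
  exact this

lemma rename_mem {N : ℕ} (σ : Equiv.Perm (Fin N)) {f : MvPolynomial (Fin N) ℤ}
    (hf : f ∈ symIdeal N) : rename σ f ∈ symIdeal N := by
  unfold symIdeal at hf
  induction hf using Submodule.span_induction with
  | mem x hx => rw [hx.1]; exact Ideal.subset_span hx
  | zero => simp
  | add x y _ _ hx hy => rw [map_add]; exact add_mem hx hy
  | smul a x _ hx => rw [smul_eq_mul, map_mul]; exact Ideal.mul_mem_left _ _ hx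

/-- `x^δ + s_i x^δ = ∂_i (x_i x^δ)`. -/
lemma stair_swap {N : ℕ} [NeZero N] {i : ℕ} (h1 : 1 ≤ i) (h2 : i < N) :
    rename (⇑(t N i (i + 1))) (staircase N) + staircase N ∈ symIdeal N := by
  have v1 := pos_val (N := N) (i := i) (by omega) h1
  have v2 := pos_val (N := N) (i := i + 1) (by omega) (by omega)
  have hne := pos_ne (N := N) h1 h2
  have key : X (pos N (i + 1)) * staircase N
      = X (pos N i) * rename (⇑(t N i (i + 1))) (staircase N) := by
    unfold staircase
    rw [map_prod]
    simp only [map_pow, rename_X]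
    rw [← Equiv.prod_comp (t N i (i + 1)) (fun j => X j ^ (N - 1 - (j : ℕ)))]
    rw [← Finset.mul_prod_erase Finset.univ _ (Finset.mem_univ (pos N i)),
      ← Finset.mul_prod_erase Finset.univ (fun j => X (t N i (i + 1) j) ^ (N - 1 - (j : ℕ)))
        (Finset.mem_univ (pos N i)),
      ← Finset.mul_prod_erase (Finset.univ.erase (pos N i)) _
        (Finset.mem_erase.mpr ⟨hne.symm, Finset.mem_univ (pos N (i + 1))⟩),
      ← Finset.mul_prod_erase (Finset.univ.erase (pos N i))
        (fun j => X (t N i (i + 1) j) ^ (N - 1 - (j : ℕ)))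
        (Finset.mem_erase.mpr ⟨hne.symm, Finset.mem_univ (pos N (i + 1))⟩)]
    have hrest : ∏ x ∈ (Finset.univ.erase (pos N i)).erase (pos N (i + 1)),
        (X (t N i (i + 1) x) : MvPolynomial (Fin N) ℤ) ^ (N - 1 - (t N i (i + 1) x : ℕ)) =
        ∏ x ∈ (Finset.univ.erase (pos N i)).erase (pos N (i + 1)),
        (X (t N i (i + 1) x) : MvPolynomial (Fin N) ℤ) ^ (N - 1 - (x : ℕ)) := by
      apply Finset.prod_congr rfl
      intro x hx
      simp only [Finset.mem_erase, Finset.mem_univ, and_true] at hx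
      rw [show t N i (i + 1) x = x from Equiv.swap_apply_of_ne_of_ne hx.2 hx.1]
    rw [hrest]
    simp only [t_left, t_right, v1, v2]
    rw [show N - 1 - (i - 1) = N - 1 - (i + 1 - 1) + 1 by omega]
    ring
  have hd : divDiff i (staircase N * X (pos N i)) =
      rename (⇑(t N i (i + 1))) (staircase N) + staircase N := by
    apply divDiff_unique h1 h2
    rw [map_mul, rename_X, t_left]
    linear_combination -key
  rw [← hd]
  exact divDiff_mem h1 h2 (X_mul_staircase N _)

lemma stair_sign (n : ℕ) (σ : Equiv.Perm (Fin (n + 1))) :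
    rename σ (staircase (n + 1)) - ((Equiv.Perm.sign σ : ℤˣ) : ℤ) • staircase (n + 1)
      ∈ symIdeal (n + 1) := by
  have hσ : σ ∈ Submonoid.closure (Set.range fun i : Fin n ↦ Equiv.swap i.castSucc i.succ) := by
    have := Equiv.Perm.mclosure_swap_castSucc_succ n
    have h2 : σ ∈ (⊤ : Submonoid (Equiv.Perm (Fin (n + 1)))) := trivial
    rw [← this] at h2
    convert h2
  induction hσ using Submonoid.closure_induction_left with
  | one => simp
  | mul_left x hx y hy ih =>
    obtain ⟨i, rfl⟩ := hx
    have ht : (Equiv.swap i.castSucc i.succ : Equiv.Perm (Fin (n + 1))) =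
        t (n + 1) (i + 1) (i + 1 + 1) := by
      unfold t
      congr 1
      · rw [Fin.ext_iff, pos_val (by omega) (by omega)]; simp
      · rw [Fin.ext_iff, pos_val (by omega) (by omega)]; simp
    have hs : Equiv.Perm.sign (t (n + 1) (i + 1) (i + 1 + 1)) = -1 := by
      rw [← ht]
      exact Equiv.Perm.sign_swap (Fin.castSucc_lt_succ).ne
    simp only [ht]
    have h1 := rename_mem (t (n + 1) (i + 1) (i + 1 + 1)) ih
    have h2 := stair_swap (N := n + 1) (i := i + 1) (by omega) (by omega)
    have h3 := Ideal.mul_mem_left _ (C ((Equiv.Perm.sign y : ℤˣ) : ℤ)) h2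
    have := add_mem h1 h3
    rw [Equiv.Perm.sign_mul, hs]
    convert this using 1
    rw [map_sub, rename_rename, ← Equiv.Perm.coe_mul]
    simp only [smul_eq_C_mul, map_mul, rename_C]
    simp
    ring

lemma sign_w0 (N : ℕ) : ((Equiv.Perm.sign (w0 N) : ℤˣ) : ℤ) = ∏ i : Fin N, (-1) ^ (N - 1 - (i : ℕ)) := by
  rw [Equiv.Perm.sign_eq_prod_prod_Ioi, Units.coe_prod]
  apply Finset.prod_congr rfl
  intro i _
  rw [Units.coe_prod, Finset.prod_congr rfl (g := fun _ => (-1 : ℤ))]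
  · simp
  · intro j hj
    have : i < j := by simpa using hj
    rw [if_neg]
    · simp
    · rw [w0_apply, w0_apply, Fin.rev_lt_rev]
      exact this.not_gt

lemma psi_staircase (n : ℕ) : psi (n + 1) (staircase (n + 1)) - staircase (n + 1) ∈ symIdeal (n + 1) := by
  have h := stair_sign n (w0 (n + 1))
  have e : psi (n + 1) (staircase (n + 1)) = C ((Equiv.Perm.sign (w0 (n + 1)) : ℤˣ) : ℤ) *
      rename (w0 (n + 1)) (staircase (n + 1)) := by
    rw [sign_w0, staircase, map_prod, map_prod, map_prod, ← Finset.prod_mul_distrib]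
    apply Finset.prod_congr rfl
    intro i _
    rw [map_pow, map_pow, map_pow, psi_X, rename_X, w0_apply, neg_pow]
    simp
  have h2 := Ideal.mul_mem_left _ (C ((Equiv.Perm.sign (w0 (n + 1)) : ℤˣ) : ℤ)) h
  convert h2 using 1
  rw [e, mul_sub, smul_eq_C_mul, ← mul_assoc, ← C_mul]
  congr 1
  rcases Int.units_eq_one_or (Equiv.Perm.sign (w0 (n + 1))) with h | h <;> simp [h]

lemma psi_mem {N : ℕ} {f : MvPolynomial (Fin N) ℤ}
    (hf : f ∈ symIdeal N) : psi N f ∈ symIdeal N := by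
  unfold symIdeal at hf
  induction hf using Submodule.span_induction with
  | mem x hx =>
    apply Ideal.subset_span
    refine ⟨?_, ?_⟩
    · intro σ
      have h := psi_rename (w0 N * σ * w0 N) x
      have e : w0 N * (w0 N * σ * w0 N) * w0 N = σ := by
        simp only [mul_assoc, w0_w0, mul_one]
        rw [← mul_assoc, w0_w0, one_mul]
      rw [e, hx.1] at h
      exact h.symm
    · have : (constantCoeff : MvPolynomial (Fin N) ℤ →+* ℤ).comp (psi N).toRingHom =
          constantCoeff := by
        apply MvPolynomial.ringHom_ext
        · intro r; simp
        · intro i; simp [psi_X]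
      have h := DFunLike.congr_fun this x
      rw [hx.2] at h
      exact h
  | zero => simp
  | add x y _ _ hx hy => rw [map_add]; exact add_mem hx hy
  | smul a x _ hx => rw [smul_eq_mul, map_mul]; exact Ideal.mul_mem_left _ _ hx

/-- `psi` as a ring automorphism of `Rₙ`. -/
noncomputable def psiEquiv (N : ℕ) : MvPolynomial (Fin N) ℤ ≃+* MvPolynomial (Fin N) ℤ :=
  { toFun := psi N
    invFun := psi N
    left_inv := psi_psi _
    right_inv := psi_psi _
    map_mul' := map_mul _
    map_add' := map_add _ }

lemma psiEquiv_apply (N : ℕ) (f : MvPolynomial (Fin N) ℤ) : psiEquiv N f = psi N f := rfl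

lemma map_symIdeal (N : ℕ) :
    symIdeal N = (symIdeal N).map (psiEquiv N : MvPolynomial (Fin N) ℤ →+* MvPolynomial (Fin N) ℤ) := by
  apply le_antisymm
  · intro f hf
    rw [← psi_psi N f]
    exact Ideal.mem_map_of_mem (psiEquiv N : MvPolynomial (Fin N) ℤ →+* MvPolynomial (Fin N) ℤ)
      (psi_mem hf)
  · rw [Ideal.map_le_iff_le_comap]
    intro f hf
    exact psi_mem hf

lemma schubertPoly_eq (N : ℕ) [NeZero N] (w : Equiv.Perm (Fin N)) :
    schubertPoly N w = opA (w⁻¹ * w0 N) (staircase N) := rfl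

lemma conj_eq (N : ℕ) (w : Equiv.Perm (Fin N)) :
    (w0 N * w * w0 N)⁻¹ * w0 N = w0 N * (w⁻¹ * w0 N) * w0 N := by
  have hi : (w0 N)⁻¹ = w0 N := inv_eq_of_mul_eq_one_right (w0_w0 N)
  simp only [mul_inv_rev, hi, mul_assoc]

/-- There is a ring automorphism of `Hₙ` sending `𝔖_w` to `𝔖_{w₀ww₀}` for all `w`
(here the paper's `n` is `n+1`). -/
theorem exists_ring_automorphism_schubert (n : ℕ) :
    ∃ φ : HRing (n + 1) ≃+* HRing (n + 1),
      ∀ w : Equiv.Perm (Fin (n + 1)),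
        φ (SS (n + 1) w) = SS (n + 1) (w0 (n + 1) * w * w0 (n + 1)) := by
  refine ⟨Ideal.quotientEquiv _ _ (psiEquiv (n + 1)) (map_symIdeal (n + 1)), fun w => ?_⟩
  rw [SS, Ideal.quotientEquiv_mk, SS, Ideal.Quotient.eq, psiEquiv_apply, schubertPoly_eq,
    schubertPoly_eq, conj_eq, psi_opA _ _ rfl, ← opA_sub _ _ rfl]
  exact opA_mem _ _ rfl _ (psi_staircase n)

end SchubertPieri
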